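/- arXiv:2111.00470 — 3 statements merged into one kernel-verified Lean document; each statement's English description precedes it below -/
import Mathlib

section
/- Under Assumptions 1 and 2, given nonempty scheduling sets S_0, …, S_{τ−1} ⊆ 𝒦 and a constant learning rate ς with 0 < ς ≤ 1/L, let the iterates satisfy w_t = w_{t−1} − ς·(∑_{k∈S_t} α_k G_k(w_{t−1})) / (∑_{k∈S_t} α_k) for t = 0, …, τ−1, starting from w_{−1} = w_0's predecessor convention, i.e., iterate index t runs over τ rounds starting from initial point w_0. If w* is a global minimizer of F (F(w*) ≤ F(w) for all w), then the average squared gradient norm satisfies (1/τ)·∑_{t=0}^{τ−1} ‖∇F(w_{t−1})‖² ≤ 2(F(w_0) − F(w*))/(ς·τ) + (4κ/τ)·∑_{t=0}^{τ−1} (1 − ∑_{k∈S_t} α_k)². -/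
/-! The aggregated update direction `u` of a round with participating weight `A = ∑_{k ∈ S} α k`
differs from the full gradient `g` by
`(A⁻¹ - 1) ∑_{k ∈ S} α k G k - ∑_{k ∉ S} α k G k`. Each of the two terms has norm at most
`(1 - A) √κ`, so `‖u - g‖² ≤ 4 κ (1 - A)²` (`norm_sq_aggregate_sub_le`). Smoothness with
`ς L ≤ 1` and polarization give
`F (x - ς u) ≤ F x - (ς / 2) ‖g‖² + (ς / 2) ‖u - g‖²` (`norm_sq_le_of_smooth`).
Summing over the rounds telescopes the values of `F`. -/

open scoped RealInnerProductSpace BigOperators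

/-- The error of replacing a convex combination of vectors of squared norm at most `κ` by the
renormalized combination over a nonempty subset `S`. -/
lemma norm_sq_aggregate_sub_le {K E : Type*} [Fintype K] [DecidableEq K]
    [NormedAddCommGroup E] [NormedSpace ℝ E]
    (α : K → ℝ) (hα : ∀ k, 0 < α k) (hαsum : ∑ k, α k = 1)
    (g : K → E) (κ : ℝ) (hκ : 0 ≤ κ) (hbound : ∀ k, ‖g k‖ ^ 2 ≤ κ)
    (S : Finset K) (hS : S.Nonempty) :
    ‖(∑ k ∈ S, α k)⁻¹ • ∑ k ∈ S, α k • g k - ∑ k, α k • g k‖ ^ 2 ≤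
      4 * κ * (1 - ∑ k ∈ S, α k) ^ 2 := by
  have hnorm : ∀ T : Finset K, ‖∑ k ∈ T, α k • g k‖ ≤ (∑ k ∈ T, α k) * √κ := by
    intro T
    rw [Finset.sum_mul]
    refine norm_sum_le_of_le _ fun k _ => ?_
    rw [norm_smul, Real.norm_of_nonneg (hα k).le]
    exact mul_le_mul_of_nonneg_left (Real.le_sqrt_of_sq_le (hbound k)) (hα k).le
  have hA : 0 < ∑ k ∈ S, α k := Finset.sum_pos (fun k _ => hα k) hS
  have hAc : ∑ k ∈ Sᶜ, α k = 1 - ∑ k ∈ S, α k := by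
    rw [← hαsum, ← Finset.sum_add_sum_compl S α]; ring
  have hAc0 : 0 ≤ 1 - ∑ k ∈ S, α k := hAc ▸ Finset.sum_nonneg fun k _ => (hα k).le
  have h1 := hnorm S
  have h2 := hnorm Sᶜ
  rw [hAc] at h2
  rw [← Finset.sum_add_sum_compl S fun k => α k • g k]
  generalize (∑ k ∈ S, α k) = A at *
  generalize (∑ k ∈ S, α k • g k) = p at *
  generalize (∑ k ∈ Sᶜ, α k • g k) = q at *
  have hinv : A⁻¹ - 1 = (1 - A) / A := by field_simp
  have hp : ‖(A⁻¹ - 1) • p‖ ≤ (1 - A) * √κ := by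
    have h0 : 0 ≤ (1 - A) / A := by positivity
    rw [hinv, norm_smul, Real.norm_of_nonneg h0]
    calc (1 - A) / A * ‖p‖ ≤ (1 - A) / A * (A * √κ) := mul_le_mul_of_nonneg_left h1 h0
      _ = (1 - A) * √κ := by field_simp
  have hsplit : A⁻¹ • p - (p + q) = (A⁻¹ - 1) • p - q := by
    rw [sub_smul, one_smul]; abel
  have hle : ‖A⁻¹ • p - (p + q)‖ ≤ 2 * ((1 - A) * √κ) := by
    rw [hsplit]; linarith [norm_sub_le ((A⁻¹ - 1) • p) q]
  calc ‖A⁻¹ • p - (p + q)‖ ^ 2 ≤ (2 * ((1 - A) * √κ)) ^ 2 :=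
        pow_le_pow_left₀ (norm_nonneg _) hle 2
    _ = 4 * √κ ^ 2 * (1 - A) ^ 2 := by ring
    _ = 4 * κ * (1 - A) ^ 2 := by rw [Real.sq_sqrt hκ]

/-- Descent estimate for a step of length `ς ≤ 1 / L` along an inexact gradient `u`; here `a` and
`b` are the function values before and after the step. -/
lemma norm_sq_le_of_smooth {E : Type*} [NormedAddCommGroup E] [InnerProductSpace ℝ E]
    (g u : E) (a b L ς : ℝ) (hL : 0 < L) (hς : 0 < ς) (hςL : ς ≤ 1 / L)
    (h : b ≤ a + ⟪-(ς • u), g⟫ + L / 2 * ‖-(ς • u)‖ ^ 2) :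
    ‖g‖ ^ 2 ≤ 2 / ς * (a - b) + ‖u - g‖ ^ 2 := by
  rw [inner_neg_left, real_inner_smul_left, norm_neg, norm_smul, Real.norm_of_nonneg hς.le] at h
  have hLς : ς * L ≤ 1 := (le_div_iff₀ hL).1 hςL
  have hq : L / 2 * (ς * ‖u‖) ^ 2 ≤ ς / 2 * ‖u‖ ^ 2 := by
    have : (ς * L) * (ς / 2 * ‖u‖ ^ 2) ≤ 1 * (ς / 2 * ‖u‖ ^ 2) :=
      mul_le_mul_of_nonneg_right hLς (by positivity)
    linarith
  have hpol := norm_sub_sq_real u g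
  have hmain : ς * (‖g‖ ^ 2 - ‖u - g‖ ^ 2) ≤ 2 * (a - b) := by
    rw [hpol]; linarith
  have := (le_div_iff₀' hς).2 hmain
  rw [mul_div_right_comm] at this
  linarith

/-- **Theorem 1 (FL convergence bound).**
Under L-smoothness (Assumption 1) and uniformly bounded local gradients
(Assumption 2), given nonempty scheduling sets `S t ⊆ 𝒦` for the rounds
`t = 0, …, τ-1` and a constant learning rate `0 < ς ≤ 1/L`, if the iterates
satisfy the aggregated one-step-gradient FL update and `wstar` is a global
minimizer of `F`, then the average squared gradient norm over the `τ` rounds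
is bounded by the optimality term plus the scheduling gap
`(4κ/τ)·∑ (1 - ∑_{k ∈ S t} α k)²`. -/
theorem fl_convergence_bound
    {K : Type*} [Fintype K] [DecidableEq K] {d : ℕ}
    (α : K → ℝ) (hα : ∀ k, 0 < α k) (hαsum : ∑ k, α k = 1)
    (G : K → EuclideanSpace ℝ (Fin d) → EuclideanSpace ℝ (Fin d))
    (F : EuclideanSpace ℝ (Fin d) → ℝ)
    (gradF : EuclideanSpace ℝ (Fin d) → EuclideanSpace ℝ (Fin d))
    (hdiff : ∀ w, HasGradientAt F (gradF w) w)
    (hgrad : ∀ w, gradF w = ∑ k, α k • G k w)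
    (L : ℝ) (hL : 0 < L)
    (hsmooth : ∀ v w, F v ≤ F w + ⟪v - w, gradF w⟫ + L / 2 * ‖v - w‖ ^ 2)
    (κ : ℝ) (hκ : 0 ≤ κ)
    (hbound : ∀ k w, ‖G k w‖ ^ 2 ≤ κ)
    (τ : ℕ) (hτ : 0 < τ)
    (S : ℕ → Finset K) (hS : ∀ t < τ, (S t).Nonempty)
    (ς : ℝ) (hς : 0 < ς) (hςL : ς ≤ 1 / L)
    (w : ℕ → EuclideanSpace ℝ (Fin d))
    (hw : ∀ t < τ,
      w (t + 1) = w t - ς • ((∑ k ∈ S t, α k)⁻¹ • ∑ k ∈ S t, α k • G k (w t)))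
    (wstar : EuclideanSpace ℝ (Fin d)) (hmin : ∀ v, F wstar ≤ F v) :
    (1 / (τ : ℝ)) * ∑ t ∈ Finset.range τ, ‖gradF (w t)‖ ^ 2 ≤
      2 * (F (w 0) - F wstar) / (ς * τ) +
        (4 * κ / τ) * ∑ t ∈ Finset.range τ, (1 - ∑ k ∈ S t, α k) ^ 2 := by
  have hstep : ∀ t ∈ Finset.range τ, ‖gradF (w t)‖ ^ 2 ≤
      2 / ς * (F (w t) - F (w (t + 1))) + 4 * κ * (1 - ∑ k ∈ S t, α k) ^ 2 := by
    intro t ht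
    have ht := Finset.mem_range.1 ht
    have hsm := hsmooth (w (t + 1)) (w t)
    have hdiff_w : w (t + 1) - w t =
        -(ς • ((∑ k ∈ S t, α k)⁻¹ • ∑ k ∈ S t, α k • G k (w t))) := by
      rw [hw t ht]; abel
    rw [hdiff_w] at hsm
    have h1 := norm_sq_le_of_smooth _ _ _ _ L ς hL hς hςL hsm
    have h2 := norm_sq_aggregate_sub_le α hα hαsum (fun k => G k (w t)) κ hκ
      (fun k => hbound k (w t)) (S t) (hS t ht)
    rw [← hgrad] at h2
    linarith
  have hsum := Finset.sum_le_sum hstep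
  rw [Finset.sum_add_distrib, ← Finset.mul_sum, ← Finset.mul_sum,
    Finset.sum_range_sub' (fun t => F (w t))] at hsum
  have hτ' : (0 : ℝ) < τ := Nat.cast_pos.2 hτ
  have hF : 2 / ς * (F (w 0) - F (w τ)) ≤ 2 / ς * (F (w 0) - F wstar) :=
    mul_le_mul_of_nonneg_left (by linarith [hmin (w τ)]) (by positivity)
  calc (1 / (τ : ℝ)) * ∑ t ∈ Finset.range τ, ‖gradF (w t)‖ ^ 2
      ≤ (1 / (τ : ℝ)) * (2 / ς * (F (w 0) - F wstar) +
          4 * κ * ∑ t ∈ Finset.range τ, (1 - ∑ k ∈ S t, α k) ^ 2) :=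
        mul_le_mul_of_nonneg_left (by linarith) (by positivity)
    _ = _ := by field_simp
end

section
/- Under Assumptions 1 and 2, let S ⊆ 𝒦 be a nonempty scheduling set, let ς satisfy 0 < ς ≤ 1/L, and define the one-round FL update w' = w − ς·(∑_{k∈S} α_k G_k(w)) / (∑_{k∈S} α_k). Then the squared gradient norm at w is bounded by ‖∇F(w)‖² ≤ 2·(F(w) − F(w'))/ς + 4κ·(∑_{k∉S} α_k)². -/
/-!
Write `g = ∇F(w)` and let `h` be the aggregated direction, so that `w' = w - ς h`. Smoothness and
`L ς ≤ 1` give `F(w') ≤ F(w) - ς ⟪h, g⟫ + (ς / 2) ‖h‖²`; completing the square, this is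
`‖g‖² ≤ 2 (F(w) - F(w')) / ς + ‖g - h‖²` (`sq_norm_le_of_descent`).

It remains to bound the aggregation error `g - h`. Put `A = ∑_{k ∈ S} α_k` and
`B = ∑_{k ∉ S} α_k = 1 - A`. Since `A h = ∑_{k ∈ S} α_k G_k(w)`, the error equals
`∑_{k ∉ S} α_k G_k(w) - B h`. Both terms have norm at most `B √κ` by `norm_weighted_sum_le`
(`h` is a weighted average of vectors of norm at most `√κ`), so `‖g - h‖² ≤ 4 κ B²`.
-/

open scoped RealInnerProductSpace BigOperators

theorem norm_weighted_sum_le {K E : Type*} [NormedAddCommGroup E] [NormedSpace ℝ E]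
    (T : Finset K) (α : K → ℝ) (hα : ∀ k, 0 ≤ α k) (x : K → E) (c : ℝ) (hx : ∀ k, ‖x k‖ ≤ c) :
    ‖∑ k ∈ T, α k • x k‖ ≤ (∑ k ∈ T, α k) * c := by
  rw [Finset.sum_mul]
  refine norm_sum_le_of_le T fun k _ => ?_
  rw [norm_smul, Real.norm_of_nonneg (hα k)]
  exact mul_le_mul_of_nonneg_left (hx k) (hα k)

/-- Inexact gradient step: moving along `-h` instead of `-g` costs at most `‖g - h‖²`. Here `a` and
`b` are the objective values before and after the step, and `hdesc` is the quadratic upper bound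
provided by smoothness. -/
theorem sq_norm_le_of_descent {E : Type*} [NormedAddCommGroup E] [InnerProductSpace ℝ E]
    (g h : E) (a b L ς : ℝ) (hL : 0 < L) (hς : 0 < ς) (hςL : ς ≤ 1 / L)
    (hdesc : b ≤ a + ⟪-(ς • h), g⟫ + L / 2 * ‖-(ς • h)‖ ^ 2) :
    ‖g‖ ^ 2 ≤ 2 * (a - b) / ς + ‖g - h‖ ^ 2 := by
  have hLς : ς * L ≤ 1 := (le_div_iff₀ hL).mp hςL
  rw [inner_neg_left, real_inner_smul_left, norm_neg, norm_smul, Real.norm_of_nonneg hς.le,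
    real_inner_comm] at hdesc
  have hquad : (ς * L) * (ς * ‖h‖ ^ 2) ≤ 1 * (ς * ‖h‖ ^ 2) :=
    mul_le_mul_of_nonneg_right hLς (by positivity)
  have hstep : 2 * ⟪g, h⟫ - ‖h‖ ^ 2 ≤ 2 * (a - b) / ς := by
    rw [le_div_iff₀ hς]
    linarith
  rw [norm_sub_sq_real]
  linarith

/-- **One-round gradient bound.** Under L-smoothness (Assumption 1) and
bounded local gradients (Assumption 2), for a nonempty scheduling set `S`,
learning rate `0 < ς ≤ 1/L`, and the one-round FL update
`w' = w - ς • ((∑_{k∈S} α_k • G_k w)/(∑_{k∈S} α_k))`, the squared gradient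
norm satisfies `‖∇F w‖² ≤ 2(F w - F w')/ς + 4κ·(∑_{k∉S} α_k)²`. -/
theorem fl_one_round_gradient_bound
    {K : Type*} [Fintype K] [DecidableEq K] {d : ℕ}
    (α : K → ℝ) (hα : ∀ k, 0 < α k) (hαsum : ∑ k, α k = 1)
    (G : K → EuclideanSpace ℝ (Fin d) → EuclideanSpace ℝ (Fin d))
    (F : EuclideanSpace ℝ (Fin d) → ℝ)
    (gradF : EuclideanSpace ℝ (Fin d) → EuclideanSpace ℝ (Fin d))
    (hdiff : ∀ w, HasGradientAt F (gradF w) w)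
    (hgrad : ∀ w, gradF w = ∑ k, α k • G k w)
    (L : ℝ) (hL : 0 < L)
    (hsmooth : ∀ v w, F v ≤ F w + ⟪v - w, gradF w⟫ + L / 2 * ‖v - w‖ ^ 2)
    (κ : ℝ) (hκ : 0 ≤ κ)
    (hbound : ∀ k w, ‖G k w‖ ^ 2 ≤ κ)
    (S : Finset K) (hS : S.Nonempty)
    (ς : ℝ) (hς : 0 < ς) (hςL : ς ≤ 1 / L)
    (w w' : EuclideanSpace ℝ (Fin d))
    (hw' : w' = w - ς • ((∑ k ∈ S, α k)⁻¹ • ∑ k ∈ S, α k • G k w)) :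
    ‖gradF w‖ ^ 2 ≤ 2 * (F w - F w') / ς + 4 * κ * (∑ k ∈ Sᶜ, α k) ^ 2 := by
  have hA : 0 < ∑ k ∈ S, α k := Finset.sum_pos (fun k _ => hα k) hS
  have hAB : ∑ k ∈ S, α k + ∑ k ∈ Sᶜ, α k = 1 := by rw [Finset.sum_add_sum_compl, hαsum]
  have hB : 0 ≤ ∑ k ∈ Sᶜ, α k := Finset.sum_nonneg fun k _ => (hα k).le
  have hG : ∀ k, ‖G k w‖ ≤ √κ := fun k => Real.le_sqrt_of_sq_le (hbound k w)
  have hsumS := norm_weighted_sum_le S α (fun k => (hα k).le) (fun k => G k w) _ hG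
  have hsumC := norm_weighted_sum_le Sᶜ α (fun k => (hα k).le) (fun k => G k w) _ hG
  have hg : gradF w = ∑ k ∈ S, α k • G k w + ∑ k ∈ Sᶜ, α k • G k w := by
    rw [hgrad, Finset.sum_add_sum_compl]
  set A := ∑ k ∈ S, α k
  set B := ∑ k ∈ Sᶜ, α k
  set P := ∑ k ∈ S, α k • G k w
  set R := ∑ k ∈ Sᶜ, α k • G k w
  set h := A⁻¹ • P with hh
  have hP : P = A • h := by rw [hh, smul_inv_smul₀ hA.ne']
  have hnorm : ‖h‖ ≤ √κ := by
    rw [hP, norm_smul, Real.norm_of_nonneg hA.le] at hsumS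
    exact le_of_mul_le_mul_left hsumS hA
  have herr : gradF w - h = R - B • h := by
    rw [hg, hP, eq_sub_of_add_eq hAB]
    module
  have herr_norm : ‖gradF w - h‖ ≤ 2 * B * √κ := by
    calc ‖gradF w - h‖ ≤ ‖R‖ + ‖B • h‖ := herr ▸ norm_sub_le _ _
      _ ≤ B * √κ + B * √κ := by
        rw [norm_smul, Real.norm_of_nonneg hB]
        gcongr
      _ = 2 * B * √κ := by ring
  have herr_sq : ‖gradF w - h‖ ^ 2 ≤ 4 * κ * B ^ 2 := by
    calc ‖gradF w - h‖ ^ 2 ≤ (2 * B * √κ) ^ 2 := by gcongr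
      _ = 4 * κ * B ^ 2 := by rw [mul_pow, Real.sq_sqrt hκ]; ring
  have hdesc := hsmooth w' w
  rw [show w' - w = -(ς • h) by rw [hw']; abel] at hdesc
  linarith [sq_norm_le_of_descent (gradF w) h (F w) (F w') L ς hL hς hςL hdesc]
end

section
/- (Uplink–downlink duality) Let S be a finite nonempty index set, h_k ∈ ℂ^N for k ∈ S the channel vectors, γ_k > 0 the SINR thresholds, σ² > 0 the noise power, and P > 0 the sum power budget. Then the following are equivalent: (i) there exist transmit powers p_k ≥ 0 with ∑_{k∈S} p_k ≤ P and receive beamformers m_k ∈ ℂ^N with ‖m_k‖ = 1 such that the uplink SINR constraint p_k·|⟨m_k, h_k⟩|² ≥ γ_k·(∑_{i∈S, i≠k} p_i·|⟨m_k, h_i⟩|² + σ²) holds for every k ∈ S; (ii) there exist dual transmit beamformers m̂_k ∈ ℂ^N with ∑_{k∈S} ‖m̂_k‖² ≤ P/σ² such that the downlink SINR constraint |⟨m̂_k, h_k⟩|² ≥ γ_k·(∑_{i∈S, i≠k} |⟨m̂_i, h_k⟩|² + 1) holds for every k ∈ S. -/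
/-!
Fix beam directions and put `G k i = |⟨m_k, h_i⟩|²`. Both families of SINR constraints are then
linear in the powers: uplink reads `M p ≥ σ² 1` and downlink reads `Mᵀ q ≥ 1`, where `M` has
diagonal `G k k / γ k` and off-diagonal entries `-G k i ≤ 0`. A matrix with nonpositive
off-diagonal entries admitting `p ≥ 0` with `M p ≥ 1` is inverse-positive
(`nonneg_of_mulVec_nonneg`), so `Mᵀ q = 1` has a solution `q ≥ 0`, and
`∑ q = qᵀ 1 ≤ qᵀ M p = 1ᵀ p = ∑ p` (`exists_vecMul_eq_one`). The passage between the two problems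
is thus a transposition that does not increase the sum power, and both implications follow from
`exists_dual_powers`, applied to `G` or to its transpose after rescaling by `σ²`.
-/

open scoped ComplexInnerProductSpace BigOperators

/-- Monotonicity of M-matrices: a nonnegative `p` with `M p ≥ 1` forces `x ≥ 0` whenever
`M x ≥ 0`. -/
theorem nonneg_of_mulVec_nonneg {n : Type*} [Fintype n]
    (M : Matrix n n ℝ) (hM : ∀ i j, i ≠ j → M i j ≤ 0)
    (p : n → ℝ) (hp : ∀ i, 0 < p i) (hMp : ∀ i, 1 ≤ M.mulVec p i)
    (x : n → ℝ) (hx : ∀ i, 0 ≤ M.mulVec x i) (i : n) : 0 ≤ x i := by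
  classical
  by_contra! hneg
  -- At an index `k` minimizing `x / p`, with minimum `t < 0`, the vector `x - t p ≥ 0` vanishes,
  -- so row `k` of `M (x - t p)` is nonpositive; but it equals `(M x) k - t (M p) k > 0`.
  obtain ⟨k, -, hk⟩ := Finset.exists_min_image Finset.univ (fun j => x j / p j) ⟨i, by simp⟩
  set t := x k / p k with ht
  have htneg : t < 0 := lt_of_le_of_lt (hk i (by simp)) (div_neg_of_neg_of_pos hneg (hp i))
  have hxk : x k - t * p k = 0 := by
    rw [ht, div_mul_cancel₀ _ (hp k).ne', sub_self]
  have hge : ∀ j, 0 ≤ x j - t * p j := fun j => by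
    have := (le_div_iff₀ (hp j)).1 (hk j (by simp))
    linarith
  have hrow : M.mulVec x k - t * M.mulVec p k = ∑ j, M k j * (x j - t * p j) := by
    simp only [Matrix.mulVec, dotProduct, Finset.mul_sum, ← Finset.sum_sub_distrib]
    exact Finset.sum_congr rfl fun j _ => by ring
  have hle : ∑ j, M k j * (x j - t * p j) ≤ 0 := by
    refine Finset.sum_nonpos fun j _ => ?_
    by_cases hj : k = j
    · subst hj
      simp [hxk]
    · exact mul_nonpos_of_nonpos_of_nonneg (hM k j hj) (hge j)
  nlinarith [hx k, hMp k]

/-- Linear programming duality for M-matrices: `q` is obtained as `1ᵀ M⁻¹`. -/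
theorem exists_vecMul_eq_one {n : Type*} [Fintype n] [DecidableEq n]
    (M : Matrix n n ℝ) (hM : ∀ i j, i ≠ j → M i j ≤ 0)
    (p : n → ℝ) (hp : ∀ i, 0 ≤ p i) (hMp : ∀ i, 1 ≤ M.mulVec p i) :
    ∃ q : n → ℝ, (∀ i, 0 ≤ q i) ∧ Matrix.vecMul q M = 1 ∧ ∑ i, q i ≤ ∑ i, p i := by
  -- If `p k = 0`, only nonpositive terms remain in `(M p) k ≥ 1`.
  have hpos : ∀ k, 0 < p k := fun k => by
    refine lt_of_le_of_ne (hp k) fun h0 => ?_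
    have : M.mulVec p k ≤ 0 := by
      refine Finset.sum_nonpos fun j _ => ?_
      by_cases hj : k = j
      · subst hj
        simp [← h0]
      · exact mul_nonpos_of_nonpos_of_nonneg (hM k j hj) (hp j)
    linarith [hMp k]
  have hmono := nonneg_of_mulVec_nonneg M hM p hpos hMp
  have hunit : IsUnit M := by
    rw [← Matrix.mulVec_injective_iff_isUnit]
    intro x y hxy
    have hxy' : M.mulVec x = M.mulVec y := hxy
    funext i
    have h1 := hmono (x - y) (fun j => by simp [Matrix.mulVec_sub, hxy']) i
    have h2 := hmono (y - x) (fun j => by simp [Matrix.mulVec_sub, hxy']) i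
    simp only [Pi.sub_apply] at h1 h2
    linarith
  have hdet : IsUnit M.det := (Matrix.isUnit_iff_isUnit_det M).1 hunit
  have hq : ∀ j, 0 ≤ Matrix.vecMul 1 M⁻¹ j := fun j => by
    refine Finset.sum_nonneg fun i _ => ?_
    -- Column `j` of `M⁻¹` is nonnegative, since `M` maps it to the `j`-th unit vector.
    have := hmono (M⁻¹.mulVec (Pi.single j 1)) (fun l => by
      rw [Matrix.mulVec_mulVec, Matrix.mul_nonsing_inv M hdet, Matrix.one_mulVec]
      exact (Pi.single_nonneg.2 zero_le_one : (0 : n → ℝ) ≤ Pi.single j 1) l) i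
    simpa using this
  have hqM : Matrix.vecMul (Matrix.vecMul 1 M⁻¹) M = 1 := by
    rw [Matrix.vecMul_vecMul, Matrix.nonsing_inv_mul M hdet, Matrix.vecMul_one]
  refine ⟨Matrix.vecMul 1 M⁻¹, hq, hqM, ?_⟩
  set q := Matrix.vecMul 1 M⁻¹
  calc ∑ i, q i ≤ q ⬝ᵥ M.mulVec p :=
        Finset.sum_le_sum fun i _ => le_mul_of_one_le_right (hq i) (hMp i)
    _ = ∑ i, p i := by rw [Matrix.dotProduct_mulVec, hqM, one_dotProduct]

/-- Power duality for fixed gains `G`: unit-noise SINR targets met by powers `p` are met, for the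
transposed gains, by powers `q` of no larger total. -/
theorem exists_dual_powers {ι : Type*} [DecidableEq ι] (S : Finset ι)
    (G : ι → ι → ℝ) (hG : ∀ k i, 0 ≤ G k i)
    (γ : ι → ℝ) (hγ : ∀ k ∈ S, 0 < γ k) (p : ι → ℝ) (hp : ∀ k ∈ S, 0 ≤ p k)
    (hsinr : ∀ k ∈ S, γ k * ((∑ i ∈ S.erase k, p i * G k i) + 1) ≤ p k * G k k) :
    ∃ q : ι → ℝ, (∀ k ∈ S, 0 ≤ q k) ∧ ∑ k ∈ S, q k ≤ ∑ k ∈ S, p k ∧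
      ∀ k ∈ S, γ k * ((∑ i ∈ S.erase k, q i * G i k) + 1) ≤ q k * G k k := by
  let A : ι → ι → ℝ := fun k i => if k = i then G k k / γ k else -G k i
  have hrow : ∀ k ∈ S, ∀ r : ι → ℝ, ∑ i ∈ S, A k i * r i =
      r k * G k k / γ k - ∑ i ∈ S.erase k, r i * G k i := fun k hk r => by
    rw [← Finset.add_sum_erase S _ hk, sub_eq_add_neg, ← Finset.sum_neg_distrib]
    congr 1
    · simp only [A, if_true]
      ring
    · refine Finset.sum_congr rfl fun i hi => ?_
      simp only [A, if_neg (Finset.ne_of_mem_erase hi).symm]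
      ring
  have hcol : ∀ k ∈ S, ∀ r : ι → ℝ, ∑ i ∈ S, r i * A i k =
      r k * G k k / γ k - ∑ i ∈ S.erase k, r i * G i k := fun k hk r => by
    rw [← Finset.add_sum_erase S _ hk, sub_eq_add_neg, ← Finset.sum_neg_distrib]
    congr 1
    · simp only [A, if_true]
      ring
    · refine Finset.sum_congr rfl fun i hi => ?_
      simp only [A, if_neg (Finset.ne_of_mem_erase hi)]
      ring
  obtain ⟨q, hq, hqA, hsum⟩ := exists_vecMul_eq_one (n := S) (Matrix.of fun k i => A k i)
    (fun i j hij => by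
      simp [A, hij, hG])
    (fun i => p i) (fun i => hp i i.2) (fun k => by
      have h1 : Matrix.mulVec (Matrix.of fun k i : S => A k i) (fun i => p i) k =
          ∑ i ∈ S, A k i * p i := Finset.sum_coe_sort S fun i => A k i * p i
      have h2 := hsinr k k.2
      rw [mul_comm, ← le_div_iff₀ (hγ k k.2)] at h2
      rw [h1, hrow k k.2]
      linarith)
  let r : ι → ℝ := fun k => if hk : k ∈ S then q ⟨k, hk⟩ else 0
  have hr : ∀ k : S, r k = q k := fun k => by simp [r]
  refine ⟨r, fun k hk => (hr ⟨k, hk⟩).symm ▸ hq _, ?_, fun k hk => ?_⟩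
  · rw [← Finset.sum_coe_sort S r, ← Finset.sum_coe_sort S p]
    simpa only [hr] using hsum
  · have h1 : ∑ i ∈ S, r i * A i k = 1 := by
      rw [← Finset.sum_coe_sort S fun i => r i * A i k]
      simp only [hr]
      exact congrFun hqA ⟨k, hk⟩
    rw [hcol k hk] at h1
    rw [mul_comm, ← le_div_iff₀ (hγ k hk)]
    linarith

/-- **Uplink–downlink duality.** A scheduling set `S` can meet the uplink SINR
requirements `γ_k` under the sum power constraint `P` (with unit-norm receive
beamformers `m_k`) if and only if there exist dual downlink transmit
beamformers `m̂_k` with total power at most `P/σ²` meeting the corresponding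
downlink SINR requirements (with unit noise power). -/
theorem uplink_downlink_duality
    {ι : Type*} [DecidableEq ι] {N : ℕ}
    (S : Finset ι) (hS : S.Nonempty)
    (h : ι → EuclideanSpace ℂ (Fin N))
    (γ : ι → ℝ) (hγ : ∀ k ∈ S, 0 < γ k)
    (σ2 : ℝ) (hσ2 : 0 < σ2)
    (P : ℝ) (hP : 0 < P) :
    (∃ (p : ι → ℝ) (m : ι → EuclideanSpace ℂ (Fin N)),
        (∀ k ∈ S, 0 ≤ p k) ∧ (∑ k ∈ S, p k ≤ P) ∧ (∀ k ∈ S, ‖m k‖ = 1) ∧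
        (∀ k ∈ S,
          p k * ‖⟪m k, h k⟫‖ ^ 2 ≥
            γ k * ((∑ i ∈ S.erase k, p i * ‖⟪m k, h i⟫‖ ^ 2) + σ2)))
    ↔
    (∃ mhat : ι → EuclideanSpace ℂ (Fin N),
        (∑ k ∈ S, ‖mhat k‖ ^ 2 ≤ P / σ2) ∧
        (∀ k ∈ S,
          ‖⟪mhat k, h k⟫‖ ^ 2 ≥
            γ k * ((∑ i ∈ S.erase k, ‖⟪mhat i, h k⟫‖ ^ 2) + 1))) := by
  constructor
  · rintro ⟨p, m, hp, hsum, hm, hsinr⟩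
    obtain ⟨q, hq, hqsum, hqs⟩ := exists_dual_powers S (fun k i => ‖⟪m k, h i⟫‖ ^ 2)
      (fun _ _ => by positivity) γ hγ (fun k => p k / σ2)
      (fun k hk => div_nonneg (hp k hk) hσ2.le) (fun k hk => by
        have h1 := div_le_div_of_nonneg_right (hsinr k hk) hσ2.le
        have h2 : ∑ i ∈ S.erase k, p i / σ2 * ‖⟪m k, h i⟫‖ ^ 2 =
            (∑ i ∈ S.erase k, p i * ‖⟪m k, h i⟫‖ ^ 2) / σ2 := by
          rw [Finset.sum_div]
          exact Finset.sum_congr rfl fun i _ => by ring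
        simp only [h2]
        refine (le_of_eq ?_).trans (h1.trans (le_of_eq ?_))
        · rw [mul_div_assoc, add_div, div_self hσ2.ne']
        · ring)
    have hgain : ∀ i ∈ S, ∀ k, ‖⟪((√(q i) : ℝ) : ℂ) • m i, h k⟫‖ ^ 2 =
        q i * ‖⟪m i, h k⟫‖ ^ 2 := fun i hi k => by
      rw [inner_smul_left, norm_mul, mul_pow, RCLike.norm_conj, Complex.norm_real,
        Real.norm_eq_abs, sq_abs, Real.sq_sqrt (hq i hi)]
    refine ⟨fun k => ((√(q k) : ℝ) : ℂ) • m k, ?_, fun k hk => ?_⟩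
    · have h1 : ∑ k ∈ S, ‖((√(q k) : ℝ) : ℂ) • m k‖ ^ 2 = ∑ k ∈ S, q k :=
        Finset.sum_congr rfl fun k hk => by
          rw [norm_smul, hm k hk, mul_one, Complex.norm_real, Real.norm_eq_abs, sq_abs,
            Real.sq_sqrt (hq k hk)]
      rw [h1]
      refine hqsum.trans ?_
      rw [← Finset.sum_div]
      exact div_le_div_of_nonneg_right hsum hσ2.le
    · rw [hgain k hk, Finset.sum_congr rfl fun i hi => hgain i (Finset.mem_of_mem_erase hi) k]
      exact hqs k hk
  · rintro ⟨w, hsum, hsinr⟩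
    have hw : ∀ k ∈ S, ‖w k‖ ≠ 0 := fun k hk h0 => by
      have h1 := hsinr k hk
      have h2 : 0 < γ k * ((∑ i ∈ S.erase k, ‖⟪w i, h k⟫‖ ^ 2) + 1) :=
        mul_pos (hγ k hk) (add_pos_of_nonneg_of_pos (Finset.sum_nonneg fun _ _ => sq_nonneg _)
          one_pos)
      rw [norm_eq_zero.1 h0, inner_zero_left] at h1
      norm_num at h1
      linarith
    let m : ι → EuclideanSpace ℂ (Fin N) := fun k => ((‖w k‖⁻¹ : ℝ) : ℂ) • w k
    have hgain : ∀ i ∈ S, ∀ k, ‖w i‖ ^ 2 * ‖⟪m i, h k⟫‖ ^ 2 = ‖⟪w i, h k⟫‖ ^ 2 :=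
      fun i hi k => by
        have := hw i hi
        simp only [m]
        rw [inner_smul_left, norm_mul, mul_pow, RCLike.norm_conj, Complex.norm_real,
          Real.norm_eq_abs, sq_abs]
        field_simp
    obtain ⟨q, hq, hqsum, hqs⟩ := exists_dual_powers S (fun k i => ‖⟪m i, h k⟫‖ ^ 2)
      (fun _ _ => by positivity) γ hγ (fun k => ‖w k‖ ^ 2) (fun _ _ => by positivity)
      (fun k hk => by
        simp only [hgain k hk]
        rw [Finset.sum_congr rfl fun i hi => hgain i (Finset.mem_of_mem_erase hi) k]
        exact hsinr k hk)
    refine ⟨fun k => σ2 * q k, m, fun k hk => mul_nonneg hσ2.le (hq k hk), ?_, fun k hk => ?_,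
      fun k hk => ?_⟩
    · rw [← Finset.mul_sum, mul_comm]
      exact (le_div_iff₀ hσ2).1 (hqsum.trans hsum)
    · simp only [m]
      rw [norm_smul, Complex.norm_real, norm_inv, norm_norm, inv_mul_cancel₀ (hw k hk)]
    · have h1 := mul_le_mul_of_nonneg_left (hqs k hk) hσ2.le
      simp only [mul_assoc, ← Finset.mul_sum]
      refine le_trans (le_of_eq ?_) h1
      ring
end
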